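/- Let τ ∈ H and let (x,y) ∈ ℝ² with x ≠ 0 and x² ≠ y². Then the regularized Fourier transform F(φ̃_{−1/τ})(x,y) := lim_{T'→∞} ∫_{−T'}^{T'} ( lim_{T→∞} ∫_{−T}^{T} φ̃_{−1/τ}((a−b)/√2, (a+b)/√2)·e( −((a−b)/√2)·x + ((a+b)/√2)·y ) db ) da exists and equals τ·φ̃_τ(x,y). -/

import Mathlib

open MeasureTheory Filter Set intervalIntegral

noncomputable section

/-- `e(z) = exp(2πiz)` -/
def eC (z : ℂ) : ℂ := Complex.exp (2 * Real.pi * Complex.I * z)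

/-- The complementary error function `erfc(x) = (2/√π)∫_x^∞ e^{-r²} dr`. -/
def erfc (x : ℝ) : ℝ := (2 / Real.sqrt Real.pi) * ∫ r in Set.Ioi x, Real.exp (-(r ^ 2))

/-- `φ*_τ(x,y) = e(((y²-x²)/2)τ)·sgn(x)·erfc(√(2πv)|x|)`. -/
def phiStar (τ : ℂ) (x y : ℝ) : ℂ :=
  eC ((((y : ℂ) ^ 2 - (x : ℂ) ^ 2) / 2) * τ) * (Real.sign x : ℂ) *
    (erfc (Real.sqrt (2 * Real.pi * τ.im) * |x|) : ℂ)

/-- `φ⁺_τ(x,y) = e(((y²-x²)/2)τ)·sgn(x)·1_{y²>x²}`. -/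
def phiPlus (τ : ℂ) (x y : ℝ) : ℂ :=
  eC ((((y : ℂ) ^ 2 - (x : ℂ) ^ 2) / 2) * τ) * (Real.sign x : ℂ) *
    (if x ^ 2 < y ^ 2 then 1 else 0)

/-- `φ̃_τ = φ⁺_τ - φ*_τ`. -/
def phiTilde (τ : ℂ) (x y : ℝ) : ℂ := phiPlus τ x y - phiStar τ x y

/-- The rotated integrand of the regularized Fourier transform of `φ̃_σ`. -/
def ftTildeIntegrand (σ : ℂ) (x y a b : ℝ) : ℂ :=
  phiTilde σ ((a - b) / Real.sqrt 2) ((a + b) / Real.sqrt 2) *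
    eC ((-(((a - b) / Real.sqrt 2) * x) + ((a + b) / Real.sqrt 2) * y : ℝ) : ℂ)

/-!
Put `σ = -1/τ` and `p, q = (y ∓ x)/√2`, and transform `φ⁺_σ` and `φ*_σ` separately.

In the rotated coordinates `φ⁺_σ` is supported on the two quadrants `0 < ab`, so its inner
integral is elementary: a character and a Gaussian in `a`, each multiplied by the Cauchy kernel
`(a - qτ)⁻¹`. Integrating the character against this kernel converges only conditionally; an
integration by parts followed by Fourier inversion evaluates it and produces the sign functions.
For the Gaussian the kernel is expanded as a Laplace transform of characters, which produces an
incomplete Gaussian integral.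

The function `φ*_σ` is integrable, so rotation invariance and Fubini reduce its transform to that of
`x ↦ φ*_σ(x, 0)`. Away from its jump at `0`, this function satisfies a first-order linear
differential equation with a Gaussian inhomogeneity. Its Fourier transform satisfies the dual
equation, whose solution is an error function plus the same incomplete Gaussian integral. The
incomplete Gaussian integrals cancel in `φ⁺ - φ*`, and what remains is `τ φ̃_τ`.
-/

open scoped FourierTransform Real
open Complex (I)

lemma eC_add (z w : ℂ) : eC (z + w) = eC z * eC w := by
  simp only [eC, mul_add, Complex.exp_add]

@[simp]
lemma eC_zero : eC 0 = 1 := by simp [eC]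

lemma norm_eC (z : ℂ) : ‖eC z‖ = Real.exp (-(2 * π * z.im)) := by
  simp [eC, Complex.norm_exp]

lemma norm_eC_ofReal (t : ℝ) : ‖eC t‖ = 1 := by simp [norm_eC]

@[fun_prop]
lemma continuous_eC : Continuous eC := by unfold eC; fun_prop

lemma hasDerivAt_ofReal (t : ℝ) : HasDerivAt (fun s : ℝ ↦ (s : ℂ)) 1 t :=
  (hasDerivAt_id t).ofReal_comp

lemma hasDerivAt_eC_comp {f : ℝ → ℂ} {f' : ℂ} {t : ℝ} (hf : HasDerivAt f f' t) :
    HasDerivAt (fun s ↦ eC (f s)) (2 * π * I * f' * eC (f t)) t :=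
  (hf.const_mul (2 * π * I)).cexp.congr_deriv (mul_comm _ _)

lemma hasDerivAt_eC_ofReal_mul (z : ℂ) (s : ℝ) :
    HasDerivAt (fun s : ℝ ↦ eC (s * z)) (2 * π * I * z * eC (s * z)) s := by
  simpa only [one_mul] using hasDerivAt_eC_comp (hasDerivAt_ofReal s |>.mul_const z)

lemma eC_ofReal_mul_eq_exp (z : ℂ) (s : ℝ) : eC (s * z) = Complex.exp (2 * π * I * z * s) := by
  rw [eC, mul_comm (s : ℂ), ← mul_assoc]

lemma re_two_pi_I_mul_neg {z : ℂ} (hz : 0 < z.im) : (2 * π * I * z).re < 0 := by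
  simpa using mul_pos Real.two_pi_pos hz

lemma integrableOn_eC_mul_Ioi {z : ℂ} (hz : 0 < z.im) (c : ℝ) :
    IntegrableOn (fun s : ℝ ↦ eC (s * z)) (Ioi c) := by
  simpa only [eC_ofReal_mul_eq_exp] using
    integrableOn_exp_mul_complex_Ioi (re_two_pi_I_mul_neg hz) c

lemma integral_eC_mul_Ioi {z : ℂ} (hz : 0 < z.im) (c : ℝ) :
    ∫ s in Ioi c, eC (s * z) = -eC (c * z) / (2 * π * I * z) := by
  simpa only [eC_ofReal_mul_eq_exp] using integral_exp_mul_complex_Ioi (re_two_pi_I_mul_neg hz) c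

lemma fourier_eq_integral_eC (f : ℝ → ℂ) (w : ℝ) :
    𝓕 f w = ∫ v : ℝ, eC (-(v * w)) * f v := by
  simp only [Real.fourier_real_eq_integral_exp_smul, smul_eq_mul, eC]
  refine integral_congr_ae (.of_forall fun v ↦ ?_)
  push_cast
  ring_nf

lemma fourierInv_eq_integral_eC (f : ℝ → ℂ) (w : ℝ) :
    𝓕⁻ f w = ∫ v : ℝ, eC (v * w) * f v := by
  rw [Real.fourierInv_eq_fourier_neg, fourier_eq_integral_eC]
  simp

/-! ### The Cauchy kernel -/

lemma ofReal_sub_ne_zero {z : ℂ} (hz : z.im ≠ 0) (a : ℝ) : (a - z : ℂ) ≠ 0 := fun h ↦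
  hz (by simpa using congrArg Complex.im h)

lemma integrable_inv_ofReal_sub_sq {z : ℂ} (hz : 0 < z.im) :
    Integrable fun a : ℝ ↦ ((a - z : ℂ) ^ 2)⁻¹ := by
  have hdom : Integrable fun a : ℝ ↦ (z.im ^ 2)⁻¹ * (1 + ((a - z.re) / z.im) ^ 2)⁻¹ :=
    ((integrable_inv_one_add_sq.comp_div hz.ne').comp_sub_right z.re).const_mul _
  refine hdom.mono' (by fun_prop) (.of_forall fun a ↦ le_of_eq ?_)
  have hnorm : ‖(a - z : ℂ)‖ ^ 2 = z.im ^ 2 * (1 + ((a - z.re) / z.im) ^ 2) := by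
    rw [← Complex.normSq_eq_norm_sq, Complex.normSq_apply]
    simp only [Complex.sub_re, Complex.ofReal_re, Complex.sub_im, Complex.ofReal_im]
    field_simp
    ring
  rw [norm_inv, norm_pow, hnorm, mul_inv]

lemma tendsto_inv_ofReal_sub_cocompact (z : ℂ) :
    Tendsto (fun a : ℝ ↦ (a - z : ℂ)⁻¹) (cocompact ℝ) (nhds 0) := by
  rw [← Metric.cobounded_eq_cocompact]
  exact tendsto_inv₀_cobounded.comp
    ((tendsto_sub_const_cobounded z).comp (RCLike.tendsto_ofReal_cobounded_cobounded ℂ))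

lemma hasDerivAt_inv_ofReal_sub {z : ℂ} (hz : 0 < z.im) (a : ℝ) :
    HasDerivAt (fun a : ℝ ↦ (a - z : ℂ)⁻¹) (-((a - z : ℂ) ^ 2)⁻¹) a := by
  simpa only [neg_div, one_div] using
    (hasDerivAt_ofReal a |>.sub_const z).fun_inv (ofReal_sub_ne_zero hz.ne' a)

@[fun_prop]
lemma continuous_inv_ofReal_sub {z : ℂ} (hz : z.im ≠ 0) :
    Continuous fun a : ℝ ↦ (a - z : ℂ)⁻¹ :=
  (by fun_prop : Continuous fun a : ℝ ↦ (a - z : ℂ)).inv₀ (ofReal_sub_ne_zero hz)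

lemma tendsto_integral_eC_mul_of_tendsto_zero {u u' : ℝ → ℂ} {p : ℝ} (hp : p ≠ 0)
    (hu : ∀ a, HasDerivAt u (u' a) a) (hu' : Integrable u')
    (hlim : Tendsto u (cocompact ℝ) (nhds 0)) :
    Tendsto (fun T : ℝ ↦ ∫ a in (-T)..T, eC (a * p) * u a) atTop
      (nhds (-(2 * π * I * p)⁻¹ * ∫ a : ℝ, eC (a * p) * u' a)) := by
  set c : ℂ := 2 * π * I * p
  have hc0 : c ≠ 0 := mul_ne_zero Complex.two_pi_I_ne_zero (Complex.ofReal_ne_zero.2 hp)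
  have hnorm (a : ℝ) : ‖eC (a * p)‖ = 1 := by rw [← Complex.ofReal_mul, norm_eC_ofReal]
  have hint : Integrable fun a : ℝ ↦ eC (a * p) * u' a :=
    hu'.bdd_mul (by fun_prop) (.of_forall fun a ↦ (hnorm a).le)
  have hparts (T : ℝ) : ∫ a in (-T)..T, eC (a * p) * u a =
      c⁻¹ * (u T * eC (T * p) - u (-T) * eC ((-T : ℝ) * p)
        - ∫ a in (-T)..T, eC (a * p) * u' a) := by
    have h := intervalIntegral.integral_mul_deriv_eq_deriv_mul (a := -T) (b := T) (fun a _ ↦ hu a)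
      (fun a _ ↦ hasDerivAt_eC_ofReal_mul p a) hu'.intervalIntegrable
      (Continuous.intervalIntegrable (by fun_prop) _ _)
    rw [eq_inv_mul_iff_mul_eq₀ hc0, ← intervalIntegral.integral_const_mul]
    simp only [mul_comm (eC _) (u' _)]
    rw [← h]
    exact intervalIntegral.integral_congr fun a _ ↦ by ring
  have hbdry {l : Filter ℝ} {g : ℝ → ℝ} (hg : Tendsto g l (cocompact ℝ)) :
      Tendsto (fun T ↦ u (g T) * eC (g T * p)) l (nhds 0) :=
    (tendsto_zero_iff_norm_tendsto_zero.2 <| by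
      simpa only [norm_mul, hnorm, mul_one, norm_zero, Function.comp_def] using (hlim.comp hg).norm)
  have hlimit := ((hbdry (tendsto_id.mono_right atTop_le_cocompact)).sub
    (hbdry (tendsto_neg_atTop_atBot.mono_right atBot_le_cocompact))).sub
    (intervalIntegral_tendsto_integral hint tendsto_neg_atTop_atBot tendsto_id) |>.const_mul c⁻¹
  simpa only [hparts, id_eq, sub_zero, zero_sub, mul_neg, neg_mul] using hlimit

/-- The ramp `max s 0` damped by the decaying exponential `e(sz)`, `0 < im z`: a continuous
function whose Fourier transform is a multiple of `a ↦ (a - z)⁻²`. -/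
def dampedRamp (z : ℂ) (s : ℝ) : ℂ := (max s 0 : ℝ) * eC (s * z)

lemma dampedRamp_eq_indicator (z : ℂ) :
    dampedRamp z = (Ioi 0).indicator fun s : ℝ ↦ s * eC (s * z) := by
  ext s
  rcases le_or_gt s 0 with hs | hs
  · simp [dampedRamp, hs]
  · simp [dampedRamp, hs, hs.le]

lemma integrableOn_ofReal_mul_eC_mul_Ioi {z : ℂ} (hz : 0 < z.im) :
    IntegrableOn (fun s : ℝ ↦ s * eC (s * z)) (Ioi 0) := by
  have hdom : IntegrableOn
      (fun s : ℝ ↦ s ^ (1 : ℝ) * Real.exp (-(2 * π * z.im) * s ^ (1 : ℝ))) (Ioi 0) :=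
    integrableOn_rpow_mul_exp_neg_mul_rpow (by norm_num) one_pos (by positivity)
  refine hdom.mono' (Continuous.aestronglyMeasurable (by fun_prop))
    (ae_restrict_of_forall_mem measurableSet_Ioi fun s (hs : 0 < s) ↦ le_of_eq ?_)
  simp only [norm_mul, Complex.norm_real, Real.norm_eq_abs, abs_of_pos hs, norm_eC,
    Complex.im_ofReal_mul, Real.rpow_one]
  ring_nf

lemma integral_ofReal_mul_eC_mul_Ioi {z : ℂ} (hz : 0 < z.im) :
    ∫ s in Ioi (0 : ℝ), s * eC (s * z) = ((2 * π * I * z) ^ 2)⁻¹ := by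
  have hw : 2 * π * I * z ≠ 0 := fun h ↦ (re_two_pi_I_mul_neg hz).ne (by simp [h])
  have hE := integrableOn_eC_mul_Ioi hz 0
  have hsE := integrableOn_ofReal_mul_eC_mul_Ioi hz
  have hderiv (s : ℝ) : HasDerivAt (fun s : ℝ ↦ s * eC (s * z))
      (eC (s * z) + 2 * π * I * z * (s * eC (s * z))) s :=
    ((hasDerivAt_ofReal s).fun_mul (hasDerivAt_eC_ofReal_mul z s)).congr_deriv (by ring)
  have hderiv_int : IntegrableOn
      (fun s : ℝ ↦ eC (s * z) + 2 * π * I * z * (s * eC (s * z))) (Ioi 0) :=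
    hE.add (hsE.const_mul _)
  have hzero := integral_Ioi_of_hasDerivAt_of_tendsto' (fun s _ ↦ hderiv s) hderiv_int
    (tendsto_zero_of_hasDerivAt_of_integrableOn_Ioi (fun s _ ↦ hderiv s) hderiv_int hsE)
  rw [integral_add hE (hsE.const_mul _), MeasureTheory.integral_const_mul,
    integral_eC_mul_Ioi hz] at hzero
  simp only [Complex.ofReal_zero, zero_mul, eC_zero, sub_zero] at hzero
  generalize 2 * π * I * z = w at hzero hw ⊢
  apply eq_inv_of_mul_eq_one_left
  linear_combination w * hzero + mul_inv_cancel₀ hw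

lemma integrable_dampedRamp {z : ℂ} (hz : 0 < z.im) : Integrable (dampedRamp z) := by
  rw [dampedRamp_eq_indicator, integrable_indicator_iff measurableSet_Ioi]
  exact integrableOn_ofReal_mul_eC_mul_Ioi hz

lemma fourier_dampedRamp {z : ℂ} (hz : 0 < z.im) (a : ℝ) :
    𝓕 (dampedRamp z) a = ((2 * π * I) ^ 2)⁻¹ * ((a - z : ℂ) ^ 2)⁻¹ := by
  have hint (s : ℝ) : eC (-(s * a)) * dampedRamp z s =
      (Ioi 0).indicator (fun s : ℝ ↦ s * eC (s * (z - a))) s := by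
    rw [dampedRamp_eq_indicator, ← indicator_mul_right _ fun s : ℝ ↦ eC (-(s * a))]
    congr! 2 with s
    rw [mul_left_comm, ← eC_add]
    ring_nf
  rw [fourier_eq_integral_eC, integral_congr_ae (.of_forall hint),
    MeasureTheory.integral_indicator measurableSet_Ioi,
    integral_ofReal_mul_eC_mul_Ioi (by simpa using hz : 0 < (z - a).im), mul_pow, mul_inv,
    ← neg_sub (a : ℂ) z, neg_sq]

lemma integral_eC_mul_inv_sub_sq {z : ℂ} (hz : 0 < z.im) (p : ℝ) :
    ∫ a : ℝ, eC (a * p) * ((a - z : ℂ) ^ 2)⁻¹ = (2 * π * I) ^ 2 * dampedRamp z p := by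
  have hF : 𝓕 (dampedRamp z) = fun a : ℝ ↦ ((2 * π * I) ^ 2)⁻¹ * ((a - z : ℂ) ^ 2)⁻¹ :=
    funext (fourier_dampedRamp hz)
  have hcont : Continuous (dampedRamp z) := by unfold dampedRamp; fun_prop
  have hinv := congrFun (hcont.fourierInv_fourier_eq (integrable_dampedRamp hz)
    (hF ▸ (integrable_inv_ofReal_sub_sq hz).const_mul _)) p
  rw [← hinv, hF, fourierInv_eq_integral_eC, ← MeasureTheory.integral_const_mul]
  refine integral_congr_ae (.of_forall fun a ↦ ?_)
  field_simp [Complex.two_pi_I_ne_zero]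

lemma tendsto_integral_eC_mul_inv_sub {z : ℂ} (hz : 0 < z.im) {p : ℝ} (hp : p ≠ 0) :
    Tendsto (fun T : ℝ ↦ ∫ a in (-T)..T, eC (a * p) * (a - z : ℂ)⁻¹) atTop
      (nhds (2 * π * I * if 0 < p then eC (p * z) else 0)) := by
  convert tendsto_integral_eC_mul_of_tendsto_zero hp (hasDerivAt_inv_ofReal_sub hz)
    (integrable_inv_ofReal_sub_sq hz).neg (tendsto_inv_ofReal_sub_cocompact z) using 2
  have hp' : (p : ℂ) ≠ 0 := Complex.ofReal_ne_zero.2 hp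
  simp only [mul_neg, MeasureTheory.integral_neg, integral_eC_mul_inv_sub_sq hz, dampedRamp]
  split_ifs with hpos
  · rw [max_eq_left hpos.le]
    field_simp
  · simp [max_eq_right (not_lt.1 hpos)]

lemma integrable_mul_inv_ofReal_sub {f : ℝ → ℂ} (hf : Integrable f) {z : ℂ} (hz : 0 < z.im) :
    Integrable fun a : ℝ ↦ f a * (a - z : ℂ)⁻¹ := by
  refine hf.mul_bdd (c := z.im⁻¹) (by fun_prop (disch := exact hz.ne')) (.of_forall fun a ↦ ?_)
  have : z.im ≤ ‖(a - z : ℂ)‖ := by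
    simpa [abs_of_pos hz] using Complex.abs_im_le_norm (a - z : ℂ)
  rw [norm_inv]
  gcongr

lemma integral_mul_inv_ofReal_sub {f : ℝ → ℂ} (hf : Integrable f) {z : ℂ} (hz : 0 < z.im) :
    ∫ a : ℝ, f a * (a - z : ℂ)⁻¹ = 2 * π * I * ∫ s in Ioi (0 : ℝ), eC (s * z) * 𝓕 f s := by
  have hkernel (a : ℝ) :
      (a - z : ℂ)⁻¹ = 2 * π * I * ∫ s in Ioi (0 : ℝ), eC (s * (z - a)) := by
    have hza : (z - a : ℂ) ≠ 0 := sub_ne_zero.2 (sub_ne_zero.1 (ofReal_sub_ne_zero hz.ne' a)).symm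
    rw [integral_eC_mul_Ioi (by simpa using hz), ← neg_sub z (a : ℂ)]
    simp only [Complex.ofReal_zero, zero_mul, eC_zero]
    field_simp
  have hprod : Integrable (fun x : ℝ × ℝ ↦ f x.1 * eC (x.2 * (z - x.1)))
      (volume.prod (volume.restrict (Ioi 0))) := by
    refine (hf.mul_prod (integrableOn_eC_mul_Ioi hz 0)).mono ?_ (.of_forall fun x ↦ ?_)
    · exact hf.aestronglyMeasurable.comp_fst.mul (by fun_prop)
    · simp [norm_eC]
  calc ∫ a : ℝ, f a * (a - z : ℂ)⁻¹
      = 2 * π * I * ∫ a : ℝ, ∫ s in Ioi (0 : ℝ), f a * eC (s * (z - a)) := by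
        simp only [hkernel, MeasureTheory.integral_const_mul, mul_left_comm (f _)]
    _ = 2 * π * I * ∫ s in Ioi (0 : ℝ), ∫ a : ℝ, f a * eC (s * (z - a)) := by
        rw [integral_integral_swap hprod]
    _ = 2 * π * I * ∫ s in Ioi (0 : ℝ), eC (s * z) * 𝓕 f s := by
        simp only [fourier_eq_integral_eC, ← MeasureTheory.integral_const_mul]
        congr! 5 with s a
        rw [← mul_assoc, ← eC_add, mul_comm]
        ring_nf

lemma fourier_deriv_of_jump {f f' : ℝ → ℂ} {l r : ℂ} (hf : Integrable f) (hf' : Integrable f')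
    (hderiv : ∀ X ≠ 0, HasDerivAt f (f' X) X) (hl : Tendsto f (nhdsWithin 0 (Iio 0)) (nhds l))
    (hr : Tendsto f (nhdsWithin 0 (Ioi 0)) (nhds r)) (x : ℝ) :
    𝓕 f' x = 2 * π * I * x * 𝓕 f x - (r - l) := by
  set v : ℝ → ℂ := fun X ↦ eC (-(X * x)) with hv
  set v' : ℝ → ℂ := fun X ↦ 2 * π * I * -x * v X with hv'
  have hvderiv (X : ℝ) : HasDerivAt v (v' X) X := by
    simpa only [hv, hv', mul_neg] using hasDerivAt_eC_ofReal_mul (-x) X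
  have hvnorm (X : ℝ) : ‖v X‖ ≤ 1 := by simp [hv, norm_eC]
  have hv0 (s : Set ℝ) : Tendsto v (nhdsWithin 0 s) (nhds 1) := by
    simpa [hv] using (hvderiv 0).continuousAt.continuousWithinAt.tendsto
  have hvmeas : AEStronglyMeasurable v := Continuous.aestronglyMeasurable (by fun_prop)
  have hfv : Integrable (f * v) := hf.mul_bdd hvmeas (.of_forall hvnorm)
  have hf'v : Integrable (f' * v) := hf'.mul_bdd hvmeas (.of_forall hvnorm)
  have hfv' : Integrable (f * v') :=
    (hfv.const_mul (2 * π * I * -x)).congr (.of_forall fun X ↦ mul_left_comm _ _ _)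
  have hprod (X : ℝ) (hX : X ≠ 0) : HasDerivAt (f * v) ((f' * v + f * v') X) X :=
    (hderiv X hX).mul (hvderiv X)
  have htop : Tendsto (f * v) atTop (nhds 0) :=
    tendsto_zero_of_hasDerivAt_of_integrableOn_Ioi (a := 0) (fun X hX ↦ hprod X hX.ne')
      (hf'v.add hfv').integrableOn hfv.integrableOn
  have hbot : Tendsto (f * v) atBot (nhds 0) :=
    tendsto_zero_of_hasDerivAt_of_integrableOn_Iic (a := -1)
      (fun X hX ↦ hprod X (by grind))
      (hf'v.add hfv').integrableOn hfv.integrableOn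
  have hIoi := integral_Ioi_deriv_mul_eq_sub (fun X hX ↦ hderiv X hX.ne') (fun X _ ↦ hvderiv X)
    (hf'v.add hfv').integrableOn (hr.mul (hv0 _)) htop
  have hIic := integral_Iic_deriv_mul_eq_sub (fun X hX ↦ hderiv X hX.ne) (fun X _ ↦ hvderiv X)
    (hf'v.add hfv').integrableOn (hl.mul (hv0 _)) hbot
  have hzero : ∫ X, (f' * v + f * v') X = l - r := by
    rw [← intervalIntegral.integral_Iic_add_Ioi (b := 0) (hf'v.add hfv').integrableOn
      (hf'v.add hfv').integrableOn]
    calc _ = (l * 1 - 0) + (0 - r * 1) := congrArg₂ (· + ·) hIic hIoi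
      _ = l - r := by ring
  have hsplit : ∫ X, (f' * v + f * v') X = 𝓕 f' x - 2 * π * I * x * 𝓕 f x := by
    rw [integral_add' hf'v hfv', fourier_eq_integral_eC, fourier_eq_integral_eC,
      ← MeasureTheory.integral_const_mul, sub_eq_add_neg, ← MeasureTheory.integral_neg]
    congr! 3 with X <;> simp only [hv, hv', Pi.mul_apply] <;> ring
  linear_combination hzero - hsplit

/-! ### Gaussian integrals -/

/-- The weight `1/2` automorphy factor `√(-iτ)` (principal branch) that a Gaussian
`Y ↦ e(Y²σ/2)` with `στ = -1` acquires under the Fourier transform. -/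
def thetaFactor (τ : ℂ) : ℂ := (-I * τ) ^ (1 / 2 : ℂ)

lemma integrable_eC_quadratic {σ : ℂ} (hσ : 0 < σ.im) (w : ℂ) :
    Integrable fun Y : ℝ ↦ eC ((Y : ℂ) ^ 2 / 2 * σ + Y * w) := by
  have hre : (π * I * σ).re < 0 := by simpa using mul_pos Real.pi_pos hσ
  refine (integrable_cexp_quadratic' hre (2 * π * I * w) 0).congr (.of_forall fun Y ↦ ?_)
  simp only [eC]
  ring_nf

lemma integral_eC_quadratic {σ τ : ℂ} (hσ : 0 < σ.im) (hστ : σ * τ = -1) (w : ℂ) :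
    ∫ Y : ℝ, eC ((Y : ℂ) ^ 2 / 2 * σ + Y * w) = thetaFactor τ * eC (w ^ 2 / 2 * τ) := by
  have hre : (π * I * σ).re < 0 := by simpa using mul_pos Real.pi_pos hσ
  have hσ0 : σ ≠ 0 := fun h ↦ by simp [h] at hσ
  have hτ : τ = -1 / σ := by rw [← hστ, mul_div_cancel_left₀ _ hσ0]
  have hπ : (π : ℂ) ≠ 0 := Complex.ofReal_ne_zero.2 Real.pi_ne_zero
  convert integral_cexp_quadratic hre (2 * π * I * w) 0 using 2
  · ext Y
    rw [eC]
    ring_nf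
  · rw [thetaFactor, hτ]
    congr 1
    field_simp
    simp
  · rw [eC, hτ]
    congr 1
    field_simp
    ring

lemma arg_neg_I_mul_ne_pi {τ : ℂ} (hτ : 0 < τ.im) : (-I * τ).arg ≠ π := fun h ↦ by
  have hre := (Complex.arg_eq_pi_iff.1 h).1
  have : (-I * τ).re = τ.im := by simp
  linarith

lemma thetaFactor_mul_thetaFactor {σ τ : ℂ} (hτ : 0 < τ.im) (hστ : σ * τ = -1) :
    thetaFactor σ * thetaFactor τ = 1 := by
  have hτ0 : τ ≠ 0 := fun h ↦ by simp [h] at hτ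
  have hinv : -I * σ = (-I * τ)⁻¹ :=
    eq_inv_of_mul_eq_one_left (by linear_combination I ^ 2 * hστ - Complex.I_sq)
  rw [thetaFactor, thetaFactor, hinv, Complex.inv_cpow _ _ (arg_neg_I_mul_ne_pi hτ),
    inv_mul_cancel₀]
  simp [Complex.cpow_eq_zero_iff, hτ0]

lemma thetaFactor_neg_conj_mul_thetaFactor {τ : ℂ} (hτ : 0 < τ.im) :
    thetaFactor (-(starRingEnd ℂ τ)) * thetaFactor τ = ‖τ‖ := by
  have hconj : thetaFactor (-(starRingEnd ℂ τ)) = starRingEnd ℂ (thetaFactor τ) := by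
    have hhalf : (1 / 2 : ℂ) = starRingEnd ℂ (1 / 2 : ℂ) := by simp [Complex.ext_iff]
    rw [thetaFactor, thetaFactor, show -I * -(starRingEnd ℂ τ) = starRingEnd ℂ (-I * τ) by simp,
      Complex.conj_cpow _ _ (arg_neg_I_mul_ne_pi hτ), ← hhalf]
  have hnorm : ‖thetaFactor τ‖ = √‖τ‖ := by
    have := Complex.norm_cpow_real (-I * τ) (1 / 2)
    rw [thetaFactor, Real.sqrt_eq_rpow]
    simpa using this
  rw [hconj, mul_comm, Complex.mul_conj, Complex.normSq_eq_norm_sq, hnorm,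
    Real.sq_sqrt (norm_nonneg _)]

lemma integral_eC_sq_mul {σ τ : ℂ} (hσ : 0 < σ.im) (hστ : σ * τ = -1) (w : ℂ) :
    ∫ a : ℝ, eC ((a : ℂ) ^ 2 * σ + a * w) = thetaFactor τ / √2 * eC (w ^ 2 / 4 * τ) := by
  have hsq : (√2 : ℂ) ^ 2 = 2 := by norm_cast; simp
  have h := Measure.integral_comp_mul_left
    (fun Y : ℝ ↦ eC ((Y : ℂ) ^ 2 / 2 * σ + Y * (w / √2))) √2
  rw [integral_eC_quadratic hσ hστ, div_pow, hsq] at h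
  convert h using 1
  · congr! 3 with a
    push_cast
    rw [mul_pow, hsq]
    field_simp
  · rw [abs_of_pos (by positivity), Complex.real_smul]
    push_cast
    ring_nf

/-- The incomplete Gaussian integral `∫₀ˣ e(t²τ/2) dt`. It occurs in the transforms of both `φ⁺`
and `φ*`, and cancels in their difference. -/
def gaussPrimitive (τ : ℂ) (x : ℝ) : ℂ := ∫ t in (0 : ℝ)..x, eC ((t : ℂ) ^ 2 / 2 * τ)

@[simp]
lemma gaussPrimitive_zero (τ : ℂ) : gaussPrimitive τ 0 = 0 := intervalIntegral.integral_same

lemma gaussPrimitive_neg (τ : ℂ) (x : ℝ) : gaussPrimitive τ (-x) = -gaussPrimitive τ x := by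
  have h := intervalIntegral.integral_comp_neg (a := 0) (b := x)
    fun t : ℝ ↦ eC ((t : ℂ) ^ 2 / 2 * τ)
  simp only [Complex.ofReal_neg, neg_sq, neg_zero] at h
  rw [gaussPrimitive, gaussPrimitive, h, intervalIntegral.integral_symm]

lemma hasDerivAt_gaussPrimitive (τ : ℂ) (x : ℝ) :
    HasDerivAt (gaussPrimitive τ) (eC ((x : ℂ) ^ 2 / 2 * τ)) x :=
  (Continuous.integral_hasStrictDerivAt (by fun_prop) 0 x).hasDerivAt

lemma integral_Ioi_eC_sq {σ τ : ℂ} (hτ : 0 < τ.im) (hστ : σ * τ = -1) (x : ℝ) :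
    ∫ t in Ioi x, eC ((t : ℂ) ^ 2 / 2 * τ) = thetaFactor σ / 2 - gaussPrimitive τ x := by
  set g : ℝ → ℂ := fun t ↦ eC ((t : ℂ) ^ 2 / 2 * τ)
  have hint : Integrable g := by simpa [g] using integrable_eC_quadratic hτ 0
  have hfull : ∫ t, g t = thetaFactor σ := by
    simpa [g] using integral_eC_quadratic hτ (mul_comm σ τ ▸ hστ) 0
  have heven : ∫ t in Iic (0 : ℝ), g t = ∫ t in Ioi (0 : ℝ), g t := by
    simpa [g] using integral_comp_neg_Iic (0 : ℝ) g
  have hhalf : ∫ t in Ioi (0 : ℝ), g t = thetaFactor σ / 2 := by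
    rw [← intervalIntegral.integral_Iic_add_Ioi (b := 0) hint.integrableOn hint.integrableOn,
      heven] at hfull
    linear_combination hfull / 2
  rw [← hhalf, gaussPrimitive,
    ← intervalIntegral.integral_Ioi_sub_Ioi' (a := 0) hint.integrableOn hint.integrableOn]
  ring

lemma integral_comp_add_right_Ioi {E : Type*} [NormedAddCommGroup E] [NormedSpace ℝ E]
    (f : ℝ → E) (c t : ℝ) : ∫ r in Ioi c, f (r + t) = ∫ r in Ioi (c + t), f r := by
  simpa using (measurePreserving_add_right volume t).setIntegral_preimage_emb
    (measurableEmbedding_addRight t) f (Ioi (c + t))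

lemma integrable_eC_sq_mul {σ : ℂ} (hσ : 0 < σ.im) (w : ℂ) :
    Integrable fun a : ℝ ↦ eC ((a : ℂ) ^ 2 * σ + a * w) :=
  (integrable_eC_quadratic (σ := 2 * σ) (by simpa using hσ) w).congr (.of_forall fun a ↦ by ring_nf)

lemma integral_eC_sq_mul_inv_sub {σ τ : ℂ} (hσ : 0 < σ.im) (hτ : 0 < τ.im) (hστ : σ * τ = -1)
    (p : ℝ) {q : ℝ} (hq : 0 < q) :
    ∫ a : ℝ, eC ((a : ℂ) ^ 2 * σ + a * (p + q)) * (a - q * τ : ℂ)⁻¹ =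
      2 * π * I * (eC (p * q * τ) *
        (1 / 2 - thetaFactor τ * gaussPrimitive τ ((q - p) / √2))) := by
  have hfourier (s : ℝ) : eC (s * (q * τ)) *
      𝓕 (fun a : ℝ ↦ eC ((a : ℂ) ^ 2 * σ + a * (p + q))) s =
      thetaFactor τ / √2 * eC (p * q * τ) *
        eC ((((s + (q - p)) * (√2)⁻¹ : ℝ) : ℂ) ^ 2 / 2 * τ) := by
    have hsq : (√2 : ℂ) ^ 2 = 2 := by norm_cast; simp
    simp only [fourier_eq_integral_eC, ← eC_add]
    rw [integral_congr_ae (.of_forall fun a ↦ by ring_nf : _ =ᵐ[volume]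
      fun a : ℝ ↦ eC ((a : ℂ) ^ 2 * σ + a * (p + q - s))), integral_eC_sq_mul hσ hστ,
      mul_left_comm, ← eC_add, mul_assoc, ← eC_add]
    push_cast
    rw [mul_pow, inv_pow, hsq]
    ring_nf
  have hsubst : ∫ s in Ioi (0 : ℝ), eC ((((s + (q - p)) * (√2)⁻¹ : ℝ) : ℂ) ^ 2 / 2 * τ) =
      √2 * (thetaFactor σ / 2 - gaussPrimitive τ ((q - p) / √2)) := by
    rw [integral_comp_add_right_Ioi (fun r : ℝ ↦ eC (((r * (√2)⁻¹ : ℝ) : ℂ) ^ 2 / 2 * τ)), zero_add,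
      integral_comp_mul_right_Ioi (fun t : ℝ ↦ eC ((t : ℂ) ^ 2 / 2 * τ)) _ (by positivity),
      integral_Ioi_eC_sq hτ hστ, inv_inv, Complex.real_smul, ← div_eq_mul_inv]
  have h2 : (√2 : ℂ) ≠ 0 := by simp
  rw [integral_mul_inv_ofReal_sub (integrable_eC_sq_mul hσ _) (by simpa using mul_pos hq hτ)]
  simp only [hfourier, MeasureTheory.integral_const_mul, hsubst]
  field_simp
  linear_combination eC (p * q * τ) * thetaFactor_mul_thetaFactor hτ hστ

/-! ### The transform of `φ⁺` -/

/-- The integrand of the transform of `φ⁺_σ` in the light-cone coordinates `a, b`, with dual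
coordinates `p = (y - x)/√2` and `q = (y + x)/√2`; the cone `y² > x²` is the pair of quadrants
`0 < ab`. -/
def coneIntegrand (σ : ℂ) (p q a b : ℝ) : ℂ :=
  eC (a * b * σ) * Real.sign (a - b) * (if 0 < a * b then 1 else 0) * eC (a * p + b * q)

lemma coneIntegrand_neg_neg (σ : ℂ) (p q a b : ℝ) :
    coneIntegrand σ p q (-a) (-b) = -coneIntegrand σ (-p) (-q) a b := by
  have hsign : Real.sign (-a - -b) = -Real.sign (a - b) := by rw [← Real.sign_neg]; ring_nf
  simp only [coneIntegrand, hsign, Complex.ofReal_neg, mul_neg, neg_mul, neg_neg]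

lemma coneIntegrand_eq_indicator (σ : ℂ) (p q : ℝ) {a : ℝ} (ha : 0 < a) :
    coneIntegrand σ p q a =ᵐ[volume] fun b ↦ eC (a * p) *
      ((Ioi 0).indicator (fun b : ℝ ↦ eC (b * (a * σ + q))) b -
        2 * (Ioi a).indicator (fun b : ℝ ↦ eC (b * (a * σ + q))) b) := by
  filter_upwards [Measure.ae_ne volume a] with b hb
  have hE : eC (a * b * σ) * eC (a * p + b * q) = eC (a * p) * eC (b * (a * σ + q)) := by
    simp only [← eC_add]
    ring_nf
  rcases le_or_gt b 0 with hb0 | hb0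
  · simp [coneIntegrand, (mul_nonpos_of_nonneg_of_nonpos ha.le hb0).not_gt, hb0.not_gt,
      (hb0.trans ha.le).not_gt]
  · rcases hb.lt_or_gt with hba | hba
    · simp [coneIntegrand, mul_pos ha hb0, hb0, hba.not_gt, Real.sign_of_pos (sub_pos.2 hba), hE]
    · simp only [coneIntegrand, mul_pos ha hb0, Real.sign_of_neg (sub_neg.2 hba), mem_Ioi, hb0, hba,
        indicator_of_mem, if_true]
      push_cast
      linear_combination -hE

lemma im_mul_add_pos {σ : ℂ} (hσ : 0 < σ.im) {a : ℝ} (ha : 0 < a) (q : ℝ) :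
    0 < (a * σ + q : ℂ).im := by
  simpa using mul_pos ha hσ

lemma integrable_coneIntegrand {σ : ℂ} (hσ : 0 < σ.im) (p q a : ℝ) :
    Integrable (coneIntegrand σ p q a) := by
  have hpos (p q : ℝ) {a : ℝ} (ha : 0 < a) : Integrable (coneIntegrand σ p q a) := by
    have hE := integrableOn_eC_mul_Ioi (im_mul_add_pos hσ ha q)
    exact ((((hE 0).integrable_indicator measurableSet_Ioi).sub
      (((hE a).integrable_indicator measurableSet_Ioi).const_mul 2)).const_mul _).congr
      (coneIntegrand_eq_indicator σ p q ha).symm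
  rcases lt_trichotomy a 0 with ha | rfl | ha
  · refine (hpos (-p) (-q) (neg_pos.2 ha)).comp_neg.neg.congr (.of_forall fun b ↦ ?_)
    simp [← coneIntegrand_neg_neg]
  · exact (integrable_zero _ _ _).congr (.of_forall fun b ↦ by simp [coneIntegrand])
  · exact hpos p q ha

lemma integral_coneIntegrand_neg (σ : ℂ) (p q a : ℝ) :
    ∫ b, coneIntegrand σ p q (-a) b = -∫ b, coneIntegrand σ (-p) (-q) a b := by
  rw [← integral_neg_eq_self, ← MeasureTheory.integral_neg]
  simp only [coneIntegrand_neg_neg]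

lemma integral_coneIntegrand_of_pos {σ τ : ℂ} (hσ : 0 < σ.im) (hστ : σ * τ = -1) (p q : ℝ)
    {a : ℝ} (ha : 0 < a) :
    ∫ b, coneIntegrand σ p q a b = -τ / (2 * π * I) *
      (2 * (eC ((a : ℂ) ^ 2 * σ + a * (p + q)) * (a - q * τ : ℂ)⁻¹) -
        eC (a * p) * (a - q * τ : ℂ)⁻¹) := by
  have hz := im_mul_add_pos hσ ha q
  have hE := integrableOn_eC_mul_Ioi hz
  have hinv : (a * σ + q : ℂ)⁻¹ = -τ * (a - q * τ : ℂ)⁻¹ := by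
    rw [show (a * σ + q : ℂ) = σ * (a - q * τ) by linear_combination q * hστ, mul_inv,
      inv_eq_of_mul_eq_one_right (by linear_combination -hστ : σ * -τ = 1)]
  have hexp : eC ((a : ℂ) ^ 2 * σ + a * (p + q)) = eC (a * p) * eC (a * (a * σ + q)) := by
    rw [← eC_add]
    ring_nf
  rw [integral_congr_ae (coneIntegrand_eq_indicator σ p q ha), MeasureTheory.integral_const_mul,
    integral_sub ((hE 0).integrable_indicator measurableSet_Ioi)
      (((hE a).integrable_indicator measurableSet_Ioi).const_mul 2),
    MeasureTheory.integral_const_mul, MeasureTheory.integral_indicator measurableSet_Ioi,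
    MeasureTheory.integral_indicator measurableSet_Ioi, integral_eC_mul_Ioi hz,
    integral_eC_mul_Ioi hz, div_eq_mul_inv, div_eq_mul_inv, mul_inv _ (_ + _), hinv, hexp]
  simp only [Complex.ofReal_zero, zero_mul, eC_zero]
  ring

lemma integral_coneIntegrand {σ τ : ℂ} (hσ : 0 < σ.im) (hστ : σ * τ = -1) (p q : ℝ) {a : ℝ}
    (ha : a ≠ 0) :
    ∫ b, coneIntegrand σ p q a b = -τ / (2 * π * I) *
      (2 * (eC ((a : ℂ) ^ 2 * σ + a * (p + q)) * (a - q * τ : ℂ)⁻¹) -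
        eC (a * p) * (a - q * τ : ℂ)⁻¹) := by
  rcases ha.lt_or_gt with ha | ha
  · have hflip : (a - q * τ : ℂ)⁻¹ = -((-a : ℝ) - (-q : ℝ) * τ : ℂ)⁻¹ := by
      rw [← inv_neg]
      push_cast
      ring_nf
    rw [← neg_neg a, integral_coneIntegrand_neg,
      integral_coneIntegrand_of_pos hσ hστ (-p) (-q) (neg_pos.2 ha), neg_neg, hflip]
    push_cast
    ring_nf
  · exact integral_coneIntegrand_of_pos hσ hστ p q ha

lemma intervalIntegrable_integral_coneIntegrand {σ τ : ℂ} (hσ : 0 < σ.im) (hτ : 0 < τ.im)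
    (hστ : σ * τ = -1) (p : ℝ) {q : ℝ} (hq : q ≠ 0) (s t : ℝ) :
    IntervalIntegrable (fun a ↦ ∫ b, coneIntegrand σ p q a b) volume s t := by
  have hz : (q * τ).im ≠ 0 := by simpa using ⟨hq, hτ.ne'⟩
  have hcont : Continuous fun a : ℝ ↦ -τ / (2 * π * I) *
      (2 * (eC ((a : ℂ) ^ 2 * σ + a * (p + q)) * (a - q * τ : ℂ)⁻¹) -
        eC (a * p) * (a - q * τ : ℂ)⁻¹) := by
    fun_prop (disch := exact hz)
  exact (hcont.intervalIntegrable s t).congr_ae (ae_restrict_of_ae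
    ((Measure.ae_ne volume 0).mono fun a ha ↦ (integral_coneIntegrand hσ hστ p q ha).symm))

lemma tendsto_integral_integral_coneIntegrand_of_pos {σ τ : ℂ} (hσ : 0 < σ.im) (hτ : 0 < τ.im)
    (hστ : σ * τ = -1) {p q : ℝ} (hp : p ≠ 0) (hq : 0 < q) :
    Tendsto (fun T : ℝ ↦ ∫ a in (-T)..T, ∫ b, coneIntegrand σ p q a b) atTop
      (nhds (τ * eC (p * q * τ) * ((Real.sign p - Real.sign q) / 2 +
        2 * thetaFactor τ * gaussPrimitive τ ((q - p) / √2)))) := by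
  have hz : 0 < (q * τ).im := by simpa using mul_pos hq hτ
  have hgauss := integrable_mul_inv_ofReal_sub (integrable_eC_sq_mul hσ (p + q)) hz
  have hformula (T : ℝ) : ∫ a in (-T)..T, ∫ b, coneIntegrand σ p q a b = -τ / (2 * π * I) *
      (2 * (∫ a in (-T)..T, eC ((a : ℂ) ^ 2 * σ + a * (p + q)) * (a - q * τ : ℂ)⁻¹) -
        ∫ a in (-T)..T, eC (a * p) * (a - q * τ : ℂ)⁻¹) := by
    rw [intervalIntegral.integral_congr_ae ((Measure.ae_ne volume 0).mono fun a ha _ ↦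
        integral_coneIntegrand hσ hστ p q ha), intervalIntegral.integral_const_mul,
      intervalIntegral.integral_sub (hgauss.intervalIntegrable.const_mul 2)
        (Continuous.intervalIntegrable (by fun_prop (disch := exact hz.ne')) _ _),
      intervalIntegral.integral_const_mul]
  have hlimit := (((intervalIntegral_tendsto_integral hgauss tendsto_neg_atTop_atBot
    tendsto_id).const_mul 2).sub (tendsto_integral_eC_mul_inv_sub hz hp)).const_mul
    (-τ / (2 * π * I))
  convert hlimit.congr fun T ↦ (hformula T).symm using 2
  have hexp : eC (p * (q * τ)) = eC (p * q * τ) := by rw [mul_assoc]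
  have hsign : ((Real.sign p - 1) / 2 : ℂ) = (if 0 < p then 1 else 0) - 1 := by
    rcases hp.lt_or_gt with hp | hp
    · rw [Real.sign_of_neg hp, if_neg hp.not_gt]
      norm_num
    · simp [Real.sign_of_pos hp, hp]
  rw [integral_eC_sq_mul_inv_sub hσ hτ hστ p hq, Real.sign_of_pos hq, hexp, Complex.ofReal_one,
    hsign]
  split_ifs <;> field_simp <;> ring

lemma tendsto_integral_integral_coneIntegrand {σ τ : ℂ} (hσ : 0 < σ.im) (hτ : 0 < τ.im)
    (hστ : σ * τ = -1) {p q : ℝ} (hp : p ≠ 0) (hq : q ≠ 0) :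
    Tendsto (fun T : ℝ ↦ ∫ a in (-T)..T, ∫ b, coneIntegrand σ p q a b) atTop
      (nhds (τ * eC (p * q * τ) * ((Real.sign p - Real.sign q) / 2 +
        2 * thetaFactor τ * gaussPrimitive τ ((q - p) / √2)))) := by
  rcases hq.lt_or_gt with hq | hq
  · have hreflect (T : ℝ) : ∫ a in (-T)..T, ∫ b, coneIntegrand σ p q a b =
        -∫ a in (-T)..T, ∫ b, coneIntegrand σ (-p) (-q) a b := by
      rw [← intervalIntegral.integral_neg]
      simpa only [neg_neg, integral_coneIntegrand_neg] using
        (intervalIntegral.integral_comp_neg (a := -T) (b := T)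
          fun a ↦ ∫ b, coneIntegrand σ p q a b).symm
    have hlimit := (tendsto_integral_integral_coneIntegrand_of_pos hσ hτ hστ (neg_ne_zero.2 hp)
      (neg_pos.2 hq)).neg
    convert hlimit.congr fun T ↦ (hreflect T).symm using 2
    rw [show (-q - -p) / √2 = -((q - p) / √2) by ring, gaussPrimitive_neg, Real.sign_neg,
      Real.sign_neg]
    push_cast
    rw [neg_mul_neg]
    ring
  · exact tendsto_integral_integral_coneIntegrand_of_pos hσ hτ hστ hp hq

/-! ### The transform of `φ*` -/

lemma integrable_exp_neg_sq : Integrable fun r : ℝ ↦ Real.exp (-(r ^ 2)) := by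
  simpa using integrable_exp_neg_mul_sq one_pos

lemma integral_Ioi_exp_neg_sq : ∫ r in Ioi (0 : ℝ), Real.exp (-(r ^ 2)) = √π / 2 := by
  simpa using integral_gaussian_Ioi 1

lemma erfc_eq_one_sub (t : ℝ) :
    erfc t = 1 - 2 / √π * ∫ r in (0 : ℝ)..t, Real.exp (-(r ^ 2)) := by
  have hπ : √π ≠ 0 := (Real.sqrt_pos.2 Real.pi_pos).ne'
  rw [erfc, ← intervalIntegral.integral_Ioi_sub_Ioi' integrable_exp_neg_sq.integrableOn
    integrable_exp_neg_sq.integrableOn, integral_Ioi_exp_neg_sq]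
  field_simp
  ring

@[simp]
lemma erfc_zero : erfc 0 = 1 := by simp [erfc_eq_one_sub]

lemma erfc_neg (t : ℝ) : erfc (-t) = 2 - erfc t := by
  have h := intervalIntegral.integral_comp_neg (a := 0) (b := t) fun r ↦ Real.exp (-(r ^ 2))
  simp only [neg_sq, neg_zero] at h
  rw [erfc_eq_one_sub, erfc_eq_one_sub, h, intervalIntegral.integral_symm]
  ring

lemma hasDerivAt_erfc (t : ℝ) : HasDerivAt erfc (-(2 / √π * Real.exp (-(t ^ 2)))) t := by
  rw [funext erfc_eq_one_sub]
  have hderiv := (Continuous.integral_hasStrictDerivAt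
    (by fun_prop : Continuous fun r : ℝ ↦ Real.exp (-(r ^ 2))) 0 t).hasDerivAt
  exact (hderiv.const_mul _).const_sub 1

lemma hasDerivAt_erfc_sqrt_mul {c s : ℝ} (hc : 0 ≤ c) (hs : s ^ 2 = 1) (t : ℝ) :
    HasDerivAt (fun t ↦ erfc (√c * s * t))
      (-(2 / √π * Real.exp (-(c * t ^ 2))) * (√c * s)) t := by
  have h := (hasDerivAt_erfc _).comp t (hasDerivAt_const_mul (√c * s))
  rwa [mul_pow, mul_pow, hs, Real.sq_sqrt hc, mul_one] at h

@[fun_prop]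
lemma continuous_erfc : Continuous erfc :=
  continuous_iff_continuousAt.2 fun t ↦ (hasDerivAt_erfc t).continuousAt

lemma erfc_nonneg (t : ℝ) : 0 ≤ erfc t :=
  mul_nonneg (by positivity) (setIntegral_nonneg measurableSet_Ioi fun _ _ ↦ (Real.exp_pos _).le)

lemma erfc_le_exp_neg_sq {t : ℝ} (ht : 0 ≤ t) : erfc t ≤ Real.exp (-(t ^ 2)) := by
  have htail : ∫ r in Ioi t, Real.exp (-(r ^ 2)) ≤ Real.exp (-(t ^ 2)) * (√π / 2) := by
    rw [← integral_Ioi_exp_neg_sq, ← MeasureTheory.integral_const_mul, ← zero_add t,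
      ← integral_comp_add_right_Ioi, zero_add]
    refine setIntegral_mono_on (integrable_exp_neg_sq.comp_add_right t).integrableOn
      (integrable_exp_neg_sq.const_mul _).integrableOn measurableSet_Ioi fun r hr ↦ ?_
    rw [← Real.exp_add, Real.exp_le_exp]
    nlinarith [mul_nonneg (mem_Ioi.1 hr).le ht]
  calc erfc t ≤ 2 / √π * (Real.exp (-(t ^ 2)) * (√π / 2)) := by unfold erfc; gcongr
    _ = Real.exp (-(t ^ 2)) := by field_simp

lemma measurable_sign : Measurable Real.sign :=
  Measurable.ite measurableSet_Iio measurable_const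
    (Measurable.ite measurableSet_Ioi measurable_const measurable_const)

lemma abs_sign_le_one (r : ℝ) : |Real.sign r| ≤ 1 := by
  rcases Real.sign_apply_eq r with h | h | h <;> simp [h]

lemma measurable_phiStar (σ : ℂ) : Measurable fun z : ℝ × ℝ ↦ phiStar σ z.1 z.2 := by
  have hexp : Measurable fun z : ℝ × ℝ ↦ eC (((z.2 : ℂ) ^ 2 - (z.1 : ℂ) ^ 2) / 2 * σ) :=
    Continuous.measurable (by fun_prop)
  have herfc : Measurable fun z : ℝ × ℝ ↦ (erfc (√(2 * π * σ.im) * |z.1|) : ℂ) :=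
    Continuous.measurable (by fun_prop)
  exact (hexp.mul (Complex.measurable_ofReal.comp (measurable_sign.comp measurable_fst))).mul herfc

lemma norm_phiStar_le {σ : ℂ} (hσ : 0 < σ.im) (X Y : ℝ) :
    ‖phiStar σ X Y‖ ≤ Real.exp (-(π * σ.im) * (X ^ 2 + Y ^ 2)) := by
  have herfc := erfc_le_exp_neg_sq (t := √(2 * π * σ.im) * |X|) (by positivity)
  rw [mul_pow, Real.sq_sqrt (by positivity), sq_abs] at herfc
  have him : (((Y : ℂ) ^ 2 - (X : ℂ) ^ 2) / 2 * σ).im = (Y ^ 2 - X ^ 2) / 2 * σ.im := by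
    rw [← Complex.im_ofReal_mul]
    push_cast
    rfl
  rw [phiStar, norm_mul, norm_mul, norm_eC, him, Complex.norm_real, Complex.norm_real,
    Real.norm_eq_abs, Real.norm_eq_abs, abs_of_nonneg (erfc_nonneg _)]
  calc _ ≤ Real.exp (-(2 * π * ((Y ^ 2 - X ^ 2) / 2 * σ.im))) * 1 *
        Real.exp (-(2 * π * σ.im * X ^ 2)) := by
        gcongr
        exacts [erfc_nonneg _, abs_sign_le_one X]
    _ = _ := by
      rw [mul_one, ← Real.exp_add]
      ring_nf

lemma phiStar_eq_mul_eC (σ : ℂ) (X Y : ℝ) :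
    phiStar σ X Y = phiStar σ X 0 * eC ((Y : ℂ) ^ 2 / 2 * σ) := by
  have hexp : eC (((Y : ℂ) ^ 2 - (X : ℂ) ^ 2) / 2 * σ) =
      eC ((((0 : ℝ) : ℂ) ^ 2 - (X : ℂ) ^ 2) / 2 * σ) * eC ((Y : ℂ) ^ 2 / 2 * σ) := by
    rw [← eC_add]
    push_cast
    ring_nf
  simp only [phiStar, hexp]
  ring

lemma phiStar_neg (σ : ℂ) (X Y : ℝ) : phiStar σ (-X) Y = -phiStar σ X Y := by
  simp [phiStar, Real.sign_neg]

lemma aestronglyMeasurable_phiStar_zero (σ : ℂ) :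
    AEStronglyMeasurable (fun X : ℝ ↦ phiStar σ X 0) :=
  ((measurable_phiStar σ).comp (measurable_id.prodMk measurable_const)).aestronglyMeasurable

lemma integrable_phiStar_zero {σ : ℂ} (hσ : 0 < σ.im) : Integrable fun X ↦ phiStar σ X 0 :=
  (integrable_exp_neg_mul_sq (b := π * σ.im) (by positivity)).mono'
    (aestronglyMeasurable_phiStar_zero σ)
    (.of_forall fun X ↦ by simpa using norm_phiStar_le hσ X 0)

lemma integrable_mul_phiStar_zero {σ : ℂ} (hσ : 0 < σ.im) :
    Integrable fun X : ℝ ↦ X • phiStar σ X 0 := by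
  refine (integrable_mul_exp_neg_mul_sq (b := π * σ.im) (by positivity)).norm.mono'
    (measurable_id.aestronglyMeasurable.smul (aestronglyMeasurable_phiStar_zero σ))
    (.of_forall fun X ↦ ?_)
  rw [norm_smul, norm_mul, Real.norm_of_nonneg (Real.exp_pos _).le]
  gcongr
  simpa using norm_phiStar_le hσ X 0

/-- For `s = ±1`, the smooth function on the whole line that agrees with `φ*_σ(·, 0)` on the half
line where `sgn = s`. -/
def phiStarBranch (σ : ℂ) (s X : ℝ) : ℂ :=
  eC (-((X : ℂ) ^ 2 / 2) * σ) * s * erfc (√(2 * π * σ.im) * s * X)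

lemma phiStar_zero_of_pos (σ : ℂ) {X : ℝ} (hX : 0 < X) : phiStar σ X 0 = phiStarBranch σ 1 X := by
  simp only [phiStar, phiStarBranch, Real.sign_of_pos hX, abs_of_pos hX]
  push_cast
  ring_nf

lemma phiStar_zero_of_neg (σ : ℂ) {X : ℝ} (hX : X < 0) :
    phiStar σ X 0 = phiStarBranch σ (-1) X := by
  simp only [phiStar, phiStarBranch, Real.sign_of_neg hX, abs_of_neg hX]
  push_cast
  ring_nf

lemma eC_mul_neg_conj (t : ℝ) (τ : ℂ) :
    eC (t * -(starRingEnd ℂ τ)) = eC (-t * τ) * Real.exp (-(4 * π * τ.im * t)) := by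
  have hconj : starRingEnd ℂ τ = τ - 2 * τ.im * I := by
    apply Complex.ext <;> simp
    ring
  rw [eC, eC, Complex.ofReal_exp, ← Complex.exp_add, hconj]
  congr 1
  push_cast
  linear_combination (4 * π * t * τ.im : ℂ) * Complex.I_sq

lemma hasDerivAt_phiStarBranch {σ : ℂ} (hσ : 0 < σ.im) {s : ℝ} (hs : s ^ 2 = 1) (X : ℝ) :
    HasDerivAt (phiStarBranch σ s) (-(2 * π * I * σ * X) * phiStarBranch σ s X -
      (2 / √π * √(2 * π * σ.im) : ℝ) * eC ((X : ℂ) ^ 2 / 2 * -(starRingEnd ℂ σ))) X := by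
  have hgauss := hasDerivAt_eC_comp
    (((hasDerivAt_ofReal X).fun_pow 2).div_const 2 |>.fun_neg |>.mul_const σ)
  have herfc := (hasDerivAt_erfc_sqrt_mul (by positivity : 0 ≤ 2 * π * σ.im) hs X).ofReal_comp
  have hconj := eC_mul_neg_conj (X ^ 2 / 2) σ
  rw [show 4 * π * σ.im * (X ^ 2 / 2) = 2 * π * σ.im * X ^ 2 by ring] at hconj
  refine ((hgauss.mul_const (s : ℂ)).fun_mul herfc).congr_deriv ?_
  push_cast at hconj ⊢
  rw [hconj, phiStarBranch]
  have hs' : (s : ℂ) ^ 2 = 1 := by exact_mod_cast hs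
  linear_combination (-eC (-((X : ℂ) ^ 2 / 2) * σ) * Complex.exp (-(2 * π * σ.im * X ^ 2)) *
    (2 / √π * √(2 * π * σ.im)) : ℂ) * hs'

lemma hasDerivAt_phiStar_zero {σ : ℂ} (hσ : 0 < σ.im) {X : ℝ} (hX : X ≠ 0) :
    HasDerivAt (fun X ↦ phiStar σ X 0) (-(2 * π * I * σ * X) * phiStar σ X 0 -
      (2 / √π * √(2 * π * σ.im) : ℝ) * eC ((X : ℂ) ^ 2 / 2 * -(starRingEnd ℂ σ))) X := by
  rcases hX.lt_or_gt with hX | hX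
  · rw [phiStar_zero_of_neg σ hX]
    exact (hasDerivAt_phiStarBranch hσ (by norm_num) X).congr_of_eventuallyEq
      ((eventually_lt_nhds hX).mono fun _ ↦ phiStar_zero_of_neg σ)
  · rw [phiStar_zero_of_pos σ hX]
    exact (hasDerivAt_phiStarBranch hσ (by norm_num) X).congr_of_eventuallyEq
      ((eventually_gt_nhds hX).mono fun _ ↦ phiStar_zero_of_pos σ)

lemma tendsto_phiStarBranch {σ : ℂ} (hσ : 0 < σ.im) {s : ℝ} (hs : s ^ 2 = 1) (t : Set ℝ) :
    Tendsto (phiStarBranch σ s) (nhdsWithin 0 t) (nhds s) := by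
  simpa [phiStarBranch] using
    (hasDerivAt_phiStarBranch hσ hs 0).continuousAt.tendsto.mono_left nhdsWithin_le_nhds

lemma tendsto_phiStar_zero_Ioi {σ : ℂ} (hσ : 0 < σ.im) :
    Tendsto (fun X ↦ phiStar σ X 0) (nhdsWithin 0 (Ioi 0)) (nhds 1) := by
  simpa using (tendsto_phiStarBranch hσ (one_pow 2) (Ioi 0)).congr'
    (eventually_mem_nhdsWithin.mono fun _ hX ↦ (phiStar_zero_of_pos σ (mem_Ioi.1 hX)).symm)

lemma tendsto_phiStar_zero_Iio {σ : ℂ} (hσ : 0 < σ.im) :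
    Tendsto (fun X ↦ phiStar σ X 0) (nhdsWithin 0 (Iio 0)) (nhds (-1)) := by
  simpa using (tendsto_phiStarBranch hσ neg_one_sq (Iio 0)).congr'
    (eventually_mem_nhdsWithin.mono fun _ hX ↦ (phiStar_zero_of_neg σ (mem_Iio.1 hX)).symm)

lemma integrable_eC_neg_mul_mul {f : ℝ → ℂ} (hf : Integrable f) (w : ℝ) :
    Integrable fun v : ℝ ↦ eC (-(v * w)) * f v :=
  hf.bdd_mul (c := 1) (by fun_prop) (.of_forall fun v ↦ by
    rw [← Complex.ofReal_mul, ← Complex.ofReal_neg, norm_eC_ofReal])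

lemma fourier_const_mul_sub_const_mul {f g : ℝ → ℂ} (hf : Integrable f) (hg : Integrable g)
    (c d : ℂ) (w : ℝ) : 𝓕 (fun v ↦ c * f v - d * g v) w = c * 𝓕 f w - d * 𝓕 g w := by
  simp only [fourier_eq_integral_eC, ← MeasureTheory.integral_const_mul]
  rw [← integral_sub ((integrable_eC_neg_mul_mul hf w).const_mul c)
    ((integrable_eC_neg_mul_mul hg w).const_mul d)]
  simp only [mul_sub, mul_left_comm]

lemma fourier_phiStar_zero_apply_zero (σ : ℂ) : 𝓕 (fun X ↦ phiStar σ X 0) 0 = 0 := by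
  have h := integral_neg_eq_self (fun X ↦ phiStar σ X 0) volume
  simp only [phiStar_neg, MeasureTheory.integral_neg] at h
  simpa [fourier_eq_integral_eC] using CharZero.neg_eq_self_iff.1 h

lemma fourier_eC_sq {σ τ : ℂ} (hσ : 0 < σ.im) (hστ : σ * τ = -1) (x : ℝ) :
    𝓕 (fun X : ℝ ↦ eC ((X : ℂ) ^ 2 / 2 * σ)) x = thetaFactor τ * eC ((x : ℂ) ^ 2 / 2 * τ) := by
  rw [← neg_sq (x : ℂ), ← integral_eC_quadratic hσ hστ, fourier_eq_integral_eC]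
  refine integral_congr_ae (.of_forall fun X ↦ ?_)
  simp only [← eC_add]
  ring_nf

lemma hasDerivAt_fourier_phiStar_zero {σ τ : ℂ} (hσ : 0 < σ.im) (hστ : σ * τ = -1) (x : ℝ) :
    HasDerivAt (𝓕 fun X ↦ phiStar σ X 0)
      (-τ * (2 * π * I * x * 𝓕 (fun X ↦ phiStar σ X 0) x - 2 +
        (2 / √π * √(2 * π * σ.im) : ℝ) * (thetaFactor (-(starRingEnd ℂ τ)) *
          eC ((x : ℂ) ^ 2 / 2 * -(starRingEnd ℂ τ))))) x := by
  set K : ℝ := 2 / √π * √(2 * π * σ.im)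
  set f : ℝ → ℂ := fun X ↦ phiStar σ X 0
  set m : ℝ → ℂ := fun X ↦ (-2 * π * I * X : ℂ) • f X with hm
  set e : ℝ → ℂ := fun X ↦ eC ((X : ℂ) ^ 2 / 2 * -(starRingEnd ℂ σ)) with he
  have hσ' : 0 < (-(starRingEnd ℂ σ)).im := by simpa using hσ
  have hστ' : -(starRingEnd ℂ σ) * -(starRingEnd ℂ τ) = -1 := by
    rw [neg_mul_neg, ← map_mul, hστ, map_neg, map_one]
  have hem : Integrable m := by
    refine ((integrable_mul_phiStar_zero hσ).const_mul (-2 * π * I)).congr (.of_forall fun X ↦ ?_)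
    simp only [hm, smul_eq_mul, Complex.real_smul, mul_assoc, f]
  have hee : Integrable e := by simpa [he] using integrable_eC_quadratic hσ' 0
  have hjump := fourier_deriv_of_jump (integrable_phiStar_zero hσ)
    ((hem.const_mul σ).sub (hee.const_mul K))
    (fun X hX ↦ (hasDerivAt_phiStar_zero hσ hX).congr_deriv
      (show _ = σ * m X - K * e X by simp only [hm, he, smul_eq_mul]; ring))
    (tendsto_phiStar_zero_Iio hσ) (tendsto_phiStar_zero_Ioi hσ) x
  refine (Real.hasDerivAt_fourier (integrable_phiStar_zero hσ)
    (integrable_mul_phiStar_zero hσ) x).congr_deriv ?_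
  have hjump' : σ * 𝓕 m x - K * 𝓕 e x = 2 * π * I * x * 𝓕 f x - (1 - -1) := by
    rw [← fourier_const_mul_sub_const_mul hem hee]
    exact hjump
  rw [fourier_eC_sq hσ' hστ'] at hjump'
  linear_combination -τ * hjump' + 𝓕 m x * hστ

lemma norm_mul_sqrt_im {σ τ : ℂ} (hστ : σ * τ = -1) (c : ℝ) :
    ‖τ‖ * √(c * σ.im) = √(c * τ.im) := by
  have him : ‖τ‖ ^ 2 * σ.im = τ.im := by
    have h : (‖τ‖ ^ 2 : ℝ) * σ = -(starRingEnd ℂ τ) := by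
      rw [← Complex.normSq_eq_norm_sq, ← Complex.mul_conj]
      linear_combination starRingEnd ℂ τ * hστ
    rw [← Complex.im_ofReal_mul, h, Complex.neg_im, Complex.conj_im, neg_neg]
  rw [← him, mul_left_comm, Real.sqrt_mul (sq_nonneg _), Real.sqrt_sq (norm_nonneg _)]

lemma eC_sq_mul_eC_sq_neg_conj (τ : ℂ) (x : ℝ) :
    eC ((x : ℂ) ^ 2 / 2 * τ) * eC ((x : ℂ) ^ 2 / 2 * -(starRingEnd ℂ τ)) =
      Real.exp (-(2 * π * τ.im * x ^ 2)) := by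
  have h := eC_mul_neg_conj (x ^ 2 / 2) τ
  push_cast at h ⊢
  rw [h, ← mul_assoc, ← eC_add]
  ring_nf
  simp

lemma thetaFactor_mul_fourier_phiStar_zero {σ τ : ℂ} (hσ : 0 < σ.im) (hτ : 0 < τ.im)
    (hστ : σ * τ = -1) (x : ℝ) :
    thetaFactor τ * eC ((x : ℂ) ^ 2 / 2 * τ) * 𝓕 (fun X ↦ phiStar σ X 0) x =
      τ * (2 * thetaFactor τ * gaussPrimitive τ x - (1 - erfc (√(2 * π * τ.im) * x))) := by
  set Φ : ℝ → ℂ := fun x ↦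
    thetaFactor τ * eC ((x : ℂ) ^ 2 / 2 * τ) * 𝓕 (fun X ↦ phiStar σ X 0) x -
      τ * (2 * thetaFactor τ * gaussPrimitive τ x - (1 - erfc (√(2 * π * τ.im) * x))) with hΦ
  have hderiv (x : ℝ) : HasDerivAt Φ 0 x := by
    have hexp := (hasDerivAt_eC_comp
      (((hasDerivAt_ofReal x).fun_pow 2).div_const 2 |>.mul_const τ)).const_mul (thetaFactor τ)
    have herfc := (hasDerivAt_erfc_sqrt_mul (by positivity : 0 ≤ 2 * π * τ.im) (one_pow 2)
      x).ofReal_comp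
    simp only [mul_one] at herfc
    refine ((hexp.fun_mul (hasDerivAt_fourier_phiStar_zero hσ hστ x)).fun_sub
      ((((hasDerivAt_gaussPrimitive τ x).const_mul (2 * thetaFactor τ)).fun_sub
        (herfc.const_sub 1)).const_mul τ)).congr_deriv ?_
    have hconj := eC_sq_mul_eC_sq_neg_conj τ x
    rw [← norm_mul_sqrt_im hστ]
    have hθ := thetaFactor_neg_conj_mul_thetaFactor hτ
    push_cast at hconj ⊢
    linear_combination (-τ * (2 / √π * √(2 * π * σ.im)) *
      (thetaFactor (-(starRingEnd ℂ τ)) * thetaFactor τ)) * hconj -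
      τ * (2 / √π * √(2 * π * σ.im)) * Complex.exp (-(2 * π * τ.im * x ^ 2)) * hθ
  have hconst := is_const_of_deriv_eq_zero (fun x ↦ (hderiv x).differentiableAt)
    (fun x ↦ (hderiv x).deriv) x 0
  have hzero : Φ 0 = 0 := by simp [hΦ, fourier_phiStar_zero_apply_zero]
  exact sub_eq_zero.1 (hconst.trans hzero)

/-! ### Rotation by `π/4` -/

lemma measurePreserving_rotation {c s : ℝ} (hcs : c ^ 2 + s ^ 2 = 1) :
    MeasurePreserving fun z : ℝ × ℝ ↦ (c * z.1 - s * z.2, s * z.1 + c * z.2) := by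
  set L : ℝ × ℝ →ₗ[ℝ] ℝ × ℝ :=
    Matrix.toLin (Module.Basis.finTwoProd ℝ) (Module.Basis.finTwoProd ℝ) !![c, -s; s, c] with hL
  have hdet : LinearMap.det L = 1 := by
    rw [hL, LinearMap.det_toLin, Matrix.det_fin_two_of]
    linear_combination hcs
  have hfun : (fun z : ℝ × ℝ ↦ (c * z.1 - s * z.2, s * z.1 + c * z.2)) = L := by
    funext z
    rw [hL, Matrix.toLin_finTwoProd_apply, neg_mul, sub_eq_add_neg]
  refine ⟨by fun_prop, ?_⟩
  rw [hfun, Measure.map_linearMap_addHaar_eq_smul_addHaar _ (by simp [hdet]), hdet]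
  simp

lemma measurePreserving_rotation_pi_div_four :
    MeasurePreserving fun z : ℝ × ℝ ↦ ((z.1 - z.2) / √2, (z.1 + z.2) / √2) := by
  convert measurePreserving_rotation (c := (√2)⁻¹) (s := (√2)⁻¹) (by norm_num) using 2 with z
  ring_nf

/-- The integrand of the Fourier transform of `φ` at `(x, y)` for the form `y² - x²`, in the
coordinates rotated by `π/4` that `ftTildeIntegrand` uses. -/
def rotatedIntegrand (φ : ℝ → ℝ → ℂ) (x y a b : ℝ) : ℂ :=
  φ ((a - b) / √2) ((a + b) / √2) *
    eC ((-(((a - b) / √2) * x) + ((a + b) / √2) * y : ℝ) : ℂ)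

lemma ftTildeIntegrand_eq_sub (σ : ℂ) (x y a b : ℝ) : ftTildeIntegrand σ x y a b =
    rotatedIntegrand (phiPlus σ) x y a b - rotatedIntegrand (phiStar σ) x y a b :=
  sub_mul _ _ _

lemma integrable_mul_eC_ofReal {φ : ℝ × ℝ → ℂ} (hφ : Integrable φ) (x y : ℝ) :
    Integrable fun z : ℝ × ℝ ↦ φ z * eC ((-(z.1 * x) + z.2 * y : ℝ) : ℂ) :=
  hφ.mul_bdd (c := 1) (by fun_prop) (.of_forall fun z ↦ (norm_eC_ofReal _).le)

lemma integrable_rotatedIntegrand {φ : ℝ → ℝ → ℂ} (hφ : Integrable fun z : ℝ × ℝ ↦ φ z.1 z.2)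
    (x y : ℝ) : Integrable fun z : ℝ × ℝ ↦ rotatedIntegrand φ x y z.1 z.2 :=
  measurePreserving_rotation_pi_div_four.integrable_comp_of_integrable
    (integrable_mul_eC_ofReal hφ x y)

lemma integral_integral_rotatedIntegrand {φ : ℝ → ℝ → ℂ}
    (hφ : Integrable fun z : ℝ × ℝ ↦ φ z.1 z.2) (x y : ℝ) :
    ∫ a, ∫ b, rotatedIntegrand φ x y a b =
      ∫ z : ℝ × ℝ, φ z.1 z.2 * eC ((-(z.1 * x) + z.2 * y : ℝ) : ℂ) := by
  have hrot := measurePreserving_rotation_pi_div_four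
  rw [← integral_prod _ (integrable_rotatedIntegrand hφ x y)]
  conv_rhs => rw [← hrot.map_eq]
  exact (integral_map hrot.measurable.aemeasurable
    (hrot.map_eq ▸ (integrable_mul_eC_ofReal hφ x y).aestronglyMeasurable)).symm

lemma integrable_phiStar {σ : ℂ} (hσ : 0 < σ.im) :
    Integrable fun z : ℝ × ℝ ↦ phiStar σ z.1 z.2 := by
  have hgauss := integrable_eC_quadratic hσ 0
  simp only [mul_zero, add_zero] at hgauss
  have hprod := (integrable_phiStar_zero hσ).mul_prod hgauss
  simp only [← phiStar_eq_mul_eC] at hprod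
  exact hprod

lemma integrable_rotatedIntegrand_phiStar {σ : ℂ} (hσ : 0 < σ.im) (x y a : ℝ) :
    Integrable (rotatedIntegrand (phiStar σ) x y a) := by
  have hbound (b : ℝ) :
      ‖phiStar σ ((a - b) / √2) ((a + b) / √2)‖ ≤ Real.exp (-(π * σ.im) * b ^ 2) := by
    refine (norm_phiStar_le hσ _ _).trans (Real.exp_le_exp.2 ?_)
    rw [div_pow, div_pow, Real.sq_sqrt zero_le_two]
    nlinarith [mul_nonneg (mul_pos Real.pi_pos hσ).le (sq_nonneg a)]
  have hmeas : Measurable fun b : ℝ ↦ phiStar σ ((a - b) / √2) ((a + b) / √2) :=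
    (measurable_phiStar σ).fun_comp (f := fun b ↦ ((a - b) / √2, (a + b) / √2)) (by fun_prop)
  have hint : Integrable fun b : ℝ ↦ phiStar σ ((a - b) / √2) ((a + b) / √2) :=
    (integrable_exp_neg_mul_sq (b := π * σ.im) (by positivity)).mono'
      hmeas.aestronglyMeasurable (.of_forall hbound)
  have hcont : Continuous fun b : ℝ ↦
      eC ((-(((a - b) / √2) * x) + ((a + b) / √2) * y : ℝ) : ℂ) := by
    fun_prop
  exact hint.mul_bdd hcont.aestronglyMeasurable (.of_forall fun b ↦ (norm_eC_ofReal _).le)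

lemma integral_integral_rotatedIntegrand_phiStar {σ τ : ℂ} (hσ : 0 < σ.im) (hτ : 0 < τ.im)
    (hστ : σ * τ = -1) (x y : ℝ) :
    ∫ a, ∫ b, rotatedIntegrand (phiStar σ) x y a b =
      τ * eC (((y : ℂ) ^ 2 - (x : ℂ) ^ 2) / 2 * τ) *
        (2 * thetaFactor τ * gaussPrimitive τ x - (1 - erfc (√(2 * π * τ.im) * x))) := by
  have hsplit (z : ℝ × ℝ) : phiStar σ z.1 z.2 * eC ((-(z.1 * x) + z.2 * y : ℝ) : ℂ) =
      (eC (-(z.1 * x)) * phiStar σ z.1 0) * eC ((z.2 : ℂ) ^ 2 / 2 * σ + z.2 * y) := by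
    rw [phiStar_eq_mul_eC, Complex.ofReal_add, eC_add, eC_add]
    push_cast
    ring
  have hexp : eC ((y : ℂ) ^ 2 / 2 * τ) =
      eC (((y : ℂ) ^ 2 - (x : ℂ) ^ 2) / 2 * τ) * eC ((x : ℂ) ^ 2 / 2 * τ) := by
    rw [← eC_add]
    ring_nf
  simp only [integral_integral_rotatedIntegrand (integrable_phiStar hσ), hsplit]
  rw [Measure.volume_eq_prod, integral_prod_mul (fun X : ℝ ↦ eC (-(X * x)) * phiStar σ X 0)
    (fun Y : ℝ ↦ eC ((Y : ℂ) ^ 2 / 2 * σ + Y * y)), ← fourier_eq_integral_eC,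
    integral_eC_quadratic hσ hστ, hexp]
  linear_combination eC (((y : ℂ) ^ 2 - (x : ℂ) ^ 2) / 2 * τ) *
    thetaFactor_mul_fourier_phiStar_zero hσ hτ hστ x

lemma sign_div_of_pos (r : ℝ) {c : ℝ} (hc : 0 < c) : Real.sign (r / c) = Real.sign r := by
  rcases lt_trichotomy r 0 with hr | rfl | hr
  · rw [Real.sign_of_neg hr, Real.sign_of_neg (div_neg_of_neg_of_pos hr hc)]
  · rw [zero_div]
  · rw [Real.sign_of_pos hr, Real.sign_of_pos (div_pos hr hc)]

lemma rotatedIntegrand_phiPlus (σ : ℂ) (x y a b : ℝ) :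
    rotatedIntegrand (phiPlus σ) x y a b =
      coneIntegrand σ ((y - x) / √2) ((y + x) / √2) a b := by
  have hcone : ((a - b) / √2) ^ 2 < ((a + b) / √2) ^ 2 ↔ 0 < a * b := by
    rw [div_pow, div_pow, Real.sq_sqrt zero_le_two]
    constructor <;> intro h <;> linarith
  have hsq : (√2 : ℂ) ^ 2 = 2 := by norm_cast; simp
  simp only [rotatedIntegrand, phiPlus, coneIntegrand, hcone,
    sign_div_of_pos _ (by positivity : 0 < √2)]
  congr 2
  · congr 2
    push_cast
    rw [div_pow, div_pow, hsq]
    ring_nf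
  · push_cast
    ring

lemma sign_mul_one_sub_erfc_mul_abs (c x : ℝ) :
    Real.sign x * (1 - erfc (c * |x|)) = 1 - erfc (c * x) := by
  rcases lt_trichotomy x 0 with hx | rfl | hx
  · rw [Real.sign_of_neg hx, abs_of_neg hx, mul_neg, erfc_neg]
    ring
  · simp
  · rw [Real.sign_of_pos hx, abs_of_pos hx, one_mul]

lemma sign_sub_sub_sign_add_div_two {x y : ℝ} (hxy : x ^ 2 ≠ y ^ 2) :
    (Real.sign (y - x) - Real.sign (y + x)) / 2 =
      Real.sign x * ((if x ^ 2 < y ^ 2 then 1 else 0) - 1) := by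
  rcases hxy.lt_or_gt with h | h
  · have hmul : 0 < (y - x) * (y + x) := by linarith
    rcases mul_pos_iff.1 hmul with ⟨hsub, hadd⟩ | ⟨hsub, hadd⟩
    · simp [Real.sign_of_pos hsub, Real.sign_of_pos hadd, h]
    · simp [Real.sign_of_neg hsub, Real.sign_of_neg hadd, h]
  · have hmul : (y - x) * (y + x) < 0 := by linarith
    rw [if_neg h.not_gt]
    rcases mul_neg_iff.1 hmul with ⟨hsub, hadd⟩ | ⟨hsub, hadd⟩
    · rw [Real.sign_of_pos hsub, Real.sign_of_neg hadd, Real.sign_of_neg (by linarith)]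
      norm_num
    · rw [Real.sign_of_neg hsub, Real.sign_of_pos hadd, Real.sign_of_pos (by linarith)]
      norm_num

lemma phiTilde_eq_sign_sub_erfc (τ : ℂ) {x y : ℝ} (hxy : x ^ 2 ≠ y ^ 2) :
    phiTilde τ x y = eC (((y : ℂ) ^ 2 - (x : ℂ) ^ 2) / 2 * τ) *
      ((Real.sign (y - x) - Real.sign (y + x)) / 2 + (1 - erfc (√(2 * π * τ.im) * x))) := by
  have hsign : ((Real.sign (y - x) - Real.sign (y + x)) / 2 : ℂ) =
      Real.sign x * ((if x ^ 2 < y ^ 2 then 1 else 0) - 1) :=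
    by simpa [apply_ite Complex.ofReal] using
      congrArg Complex.ofReal (sign_sub_sub_sign_add_div_two hxy)
  have herfc : (1 - erfc (√(2 * π * τ.im) * x) : ℂ) =
      Real.sign x * (1 - erfc (√(2 * π * τ.im) * |x|)) :=
    mod_cast congrArg Complex.ofReal (sign_mul_one_sub_erfc_mul_abs (√(2 * π * τ.im)) x).symm
  rw [hsign, herfc, phiTilde, phiPlus, phiStar]
  ring

lemma im_neg_one_div_pos {τ : ℂ} (hτ : 0 < τ.im) : 0 < (-1 / τ).im := by
  rw [neg_div, one_div, Complex.neg_im, Complex.inv_im, neg_div, neg_neg]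
  exact div_pos hτ (Complex.normSq_pos.2 fun h ↦ by simp [h] at hτ)

lemma integrable_ftTildeIntegrand {σ : ℂ} (hσ : 0 < σ.im) (x y a : ℝ) :
    Integrable (ftTildeIntegrand σ x y a) := by
  simp only [funext (ftTildeIntegrand_eq_sub σ x y a), rotatedIntegrand_phiPlus]
  exact (integrable_coneIntegrand hσ _ _ a).sub (integrable_rotatedIntegrand_phiStar hσ x y a)

lemma integral_ftTildeIntegrand {σ : ℂ} (hσ : 0 < σ.im) (x y a : ℝ) :
    ∫ b, ftTildeIntegrand σ x y a b =
      (∫ b, coneIntegrand σ ((y - x) / √2) ((y + x) / √2) a b) -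
        ∫ b, rotatedIntegrand (phiStar σ) x y a b := by
  simp only [ftTildeIntegrand_eq_sub, rotatedIntegrand_phiPlus]
  exact integral_sub (integrable_coneIntegrand hσ _ _ a)
    (integrable_rotatedIntegrand_phiStar hσ x y a)

lemma tendsto_integral_integral_ftTildeIntegrand {σ τ : ℂ} (hσ : 0 < σ.im) (hτ : 0 < τ.im)
    (hστ : σ * τ = -1) {x y : ℝ} (hxy : x ^ 2 ≠ y ^ 2) :
    Tendsto (fun T : ℝ ↦ ∫ a in (-T)..T, ∫ b, ftTildeIntegrand σ x y a b) atTop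
      (nhds (τ * phiTilde τ x y)) := by
  set p := (y - x) / √2 with hp
  set q := (y + x) / √2 with hq
  have hpq : p * q = (y ^ 2 - x ^ 2) / 2 := by
    rw [hp, hq, div_mul_div_comm, Real.mul_self_sqrt zero_le_two]
    ring
  have hdiff : (q - p) / √2 = x := by
    rw [hp, hq, ← sub_div, div_div, Real.mul_self_sqrt zero_le_two]
    ring
  have hpq0 : p * q ≠ 0 := fun h ↦ hxy (by linarith)
  have hstar : Integrable fun a ↦ ∫ b, rotatedIntegrand (phiStar σ) x y a b :=
    (integrable_rotatedIntegrand (integrable_phiStar hσ) x y).integral_prod_left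
  have hsplit (T : ℝ) : ∫ a in (-T)..T, ∫ b, ftTildeIntegrand σ x y a b =
      (∫ a in (-T)..T, ∫ b, coneIntegrand σ p q a b) -
        ∫ a in (-T)..T, ∫ b, rotatedIntegrand (phiStar σ) x y a b := by
    simp only [integral_ftTildeIntegrand hσ]
    exact intervalIntegral.integral_sub (intervalIntegrable_integral_coneIntegrand hσ hτ hστ p
      (right_ne_zero_of_mul hpq0) _ _) hstar.intervalIntegrable
  have hlimit := (tendsto_integral_integral_coneIntegrand hσ hτ hστ (left_ne_zero_of_mul hpq0)
    (right_ne_zero_of_mul hpq0)).sub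
    (intervalIntegral_tendsto_integral hstar tendsto_neg_atTop_atBot tendsto_id)
  convert hlimit.congr fun T ↦ (hsplit T).symm using 2
  have hcast : (p * q : ℂ) = ((y : ℂ) ^ 2 - (x : ℂ) ^ 2) / 2 := mod_cast hpq
  rw [integral_integral_rotatedIntegrand_phiStar hσ hτ hστ, phiTilde_eq_sign_sub_erfc τ hxy, hcast,
    hdiff, hp, hq, sign_div_of_pos _ (by positivity), sign_div_of_pos _ (by positivity)]
  ring

/-- the regularized Fourier transform of `φ̃_{-1/τ}` exists as an iterated
improper integral at any `(x,y)` with `x ≠ 0`, `x² ≠ y²`, and equals `τ·φ̃_τ(x,y)`. -/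
theorem stmt6 (τ : ℂ) (hτ : 0 < τ.im) (x y : ℝ) (hx : x ≠ 0) (hxy : x ^ 2 ≠ y ^ 2) :
    ∃ g : ℝ → ℂ,
      (∀ a : ℝ, Tendsto (fun T : ℝ => ∫ b in (-T)..T, ftTildeIntegrand (-1 / τ) x y a b)
        atTop (nhds (g a))) ∧
      Tendsto (fun T' : ℝ => ∫ a in (-T')..T', g a) atTop
        (nhds (τ * phiTilde τ x y)) := by
  have hτ0 : τ ≠ 0 := fun h ↦ by simp [h] at hτ
  have hσ : 0 < (-1 / τ).im := im_neg_one_div_pos hτ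
  exact ⟨fun a ↦ ∫ b, ftTildeIntegrand (-1 / τ) x y a b,
    fun a ↦ intervalIntegral_tendsto_integral (integrable_ftTildeIntegrand hσ x y a)
      tendsto_neg_atTop_atBot tendsto_id,
    tendsto_integral_integral_ftTildeIntegrand hσ hτ (div_mul_cancel₀ _ hτ0) hxy⟩

end
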